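/- The swapped composite likelihood ratio test controls the Type I error at level a for all sample sizes: for every n ∈ ℕ and a ∈ (0,1), sup_{θ*∈Θ_0} Pr_{θ*}(V̄_{α,β,n} > 1/a) ≤ a, where V̄_{α,β,n} = (V_{α,β,n}^0 + V_{α,β,n}^1)/2. -/

import Mathlib

open MeasureTheory ENNReal
open scoped BigOperators Classical

noncomputable section

/-- Division in `ℝ≥0∞` with the convention that the ratio is `0` when the
denominator is `0`. -/
def safeDiv (a b : ℝ≥0∞) : ℝ≥0∞ := if b = 0 then 0 else a / b

variable {d : ℕ} {π : Fin d → Type*} [∀ i, MeasurableSpace (π i)]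

/-- The marginal density on the coordinates in `S`, obtained by integrating a density
out over the coordinates in `[d] \ S` (as a function of the full vector, depending only
on the coordinates in `S`). -/
def marginal (μ : ∀ i, Measure (π i)) (S : Finset (Fin d))
    (f : (∀ i, π i) → ℝ≥0∞) : (∀ i, π i) → ℝ≥0∞ :=
  MeasureTheory.lmarginal μ Sᶜ f

/-- The conditional density of the coordinates in `T1` given the coordinates in `T2`,
with the convention that the ratio is `0` when the denominator is `0`. -/
def condDens (μ : ∀ i, Measure (π i)) (T1 T2 : Finset (Fin d))
    (f : (∀ i, π i) → ℝ≥0∞) (x : ∀ i, π i) : ℝ≥0∞ :=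
  safeDiv (marginal μ (T1 ∪ T2) f x) (marginal μ T2 f x)

/-- `𝕊_d`: the nonempty subsets of `[d]`. -/
abbrev Sd (d : ℕ) := {S : Finset (Fin d) // S.Nonempty}

/-- `𝕋_d`: ordered pairs of disjoint nonempty subsets of `[d]`. -/
abbrev Td (d : ℕ) := {T : Finset (Fin d) × Finset (Fin d) //
  T.1.Nonempty ∧ T.2.Nonempty ∧ Disjoint T.1 T.2}

/-- The individual composite likelihood
`p_{α,β}(x;θ) = ∏_S p_S(x_S;θ)^(α_S/γ) ∏_T p(x_{T←}|x_{T→};θ)^(β_T/γ)`,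
where `f = p(·;θ)` is the joint density. -/
def compLik (μ : ∀ i, Measure (π i)) (α : Sd d → ℝ) (β : Td d → ℝ) (γ : ℝ)
    (f : (∀ i, π i) → ℝ≥0∞) (x : ∀ i, π i) : ℝ≥0∞ :=
  (∏ S : Sd d, marginal μ S.1 f x ^ (α S / γ)) *
  (∏ T : Td d, condDens μ T.1.1 T.1.2 f x ^ (β T / γ))

/-!
If `∫⁻ R θ ∂P ≤ 1` for every `θ`, then by Tonelli the bound survives substituting for `θ` an
estimator computed from an independent sample, and Markov's inequality bounds the probability that
the average of two such ratios exceeds `1 / a`. Since a maximiser over the null hypothesis has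
composite likelihood at least that of `θ*`, it remains to bound the ratio of `p_{α,β}(·;θ)` to
`p_{α,β}(·;θ*)`, integrated against `p(·;θ*)`. A marginal density is a conditional density given no
coordinates, so both composite likelihoods are weighted geometric means of conditional densities,
and Hölder's inequality reduces the bound to a single conditional density. There, integrating out
the coordinates outside `A ∪ B` cancels the denominator and leaves `∫ p(x_A | x_B; θ) dx_A ≤ 1`.
-/

section EValue

open ProbabilityTheory

variable {Ω E F Θ : Type*} [MeasurableSpace Ω] [MeasurableSpace E] [MeasurableSpace F]
  [MeasurableSpace Θ]

lemma measure_one_div_lt_le_of_lintegral_le_one {P : Measure Ω} {V : Ω → ℝ≥0∞}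
    (hV : AEMeasurable V P) (hV_int : ∫⁻ ω, V ω ∂P ≤ 1) (a : ℝ≥0∞) :
    P {ω | 1 / a < V ω} ≤ a := by
  have markov : a⁻¹ * P {ω | a⁻¹ ≤ V ω} ≤ 1 := (mul_meas_ge_le_lintegral₀ hV a⁻¹).trans hV_int
  calc P {ω | 1 / a < V ω}
      ≤ P {ω | a⁻¹ ≤ V ω} := measure_mono fun ω hω => by
        simpa only [Set.mem_ofPred_eq, one_div] using (Set.mem_ofPred.1 hω).le
    _ ≤ (a⁻¹)⁻¹ := ENNReal.le_inv_iff_mul_le.2 (mul_comm a⁻¹ _ ▸ markov)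
    _ = a := inv_inv a

lemma lintegral_prod_comp_estimator_le_one {P : Measure E} [SFinite P] {Q : Measure F}
    [IsProbabilityMeasure Q] {R : Θ → E → ℝ≥0∞} (hR : Measurable (Function.uncurry R))
    (hR_int : ∀ θ, ∫⁻ x, R θ x ∂P ≤ 1) {t : F → Θ} (ht : Measurable t) :
    ∫⁻ z, R (t z.1) z.2 ∂(Q.prod P) ≤ 1 := by
  have hRt : Measurable fun z : F × E => R (t z.1) z.2 :=
    hR.comp ((ht.comp measurable_fst).prodMk measurable_snd)
  calc ∫⁻ z, R (t z.1) z.2 ∂(Q.prod P)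
      = ∫⁻ y, ∫⁻ x, R (t y) x ∂P ∂Q := lintegral_prod _ hRt.aemeasurable
    _ ≤ ∫⁻ _, 1 ∂Q := lintegral_mono fun y => hR_int (t y)
    _ = 1 := by simp

lemma measure_one_div_lt_swapped_average_le {Pr : Measure Ω} {P : Measure E} {Q : Measure F}
    [IsProbabilityMeasure P] [IsProbabilityMeasure Q] {X : Ω → E} {Y : Ω → F}
    (hXY : HasLaw (fun ω => (X ω, Y ω)) (P.prod Q) Pr)
    {R : Θ → E → ℝ≥0∞} {R' : Θ → F → ℝ≥0∞}
    (hR : Measurable (Function.uncurry R)) (hR' : Measurable (Function.uncurry R'))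
    (hR_int : ∀ θ, ∫⁻ x, R θ x ∂P ≤ 1) (hR'_int : ∀ θ, ∫⁻ y, R' θ y ∂Q ≤ 1)
    {s : F → Θ} {t : E → Θ} (hs : Measurable s) (ht : Measurable t) (a : ℝ≥0∞) :
    Pr {ω | 1 / a < (R (s (Y ω)) (X ω) + R' (t (X ω)) (Y ω)) / 2} ≤ a := by
  have hRs : Measurable fun z : E × F => R (s z.2) z.1 :=
    hR.comp ((hs.comp measurable_snd).prodMk measurable_fst)
  have hR't : Measurable fun z : E × F => R' (t z.1) z.2 :=
    hR'.comp ((ht.comp measurable_fst).prodMk measurable_snd)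
  have hV : Measurable fun z : E × F => (R (s z.2) z.1 + R' (t z.1) z.2) / 2 :=
    (hRs.add hR't).div_const 2
  have hRs_int : ∫⁻ z, R (s z.2) z.1 ∂(P.prod Q) ≤ 1 := by
    rw [← lintegral_prod_swap]
    exact lintegral_prod_comp_estimator_le_one hR hR_int hs
  refine measure_one_div_lt_le_of_lintegral_le_one (hV.comp_aemeasurable hXY.aemeasurable) ?_ a
  calc ∫⁻ ω, (R (s (Y ω)) (X ω) + R' (t (X ω)) (Y ω)) / 2 ∂Pr
      = ∫⁻ z, (R (s z.2) z.1 + R' (t z.1) z.2) / 2 ∂(P.prod Q) :=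
        hXY.lintegral_comp hV.aemeasurable
    _ = (∫⁻ z, R (s z.2) z.1 ∂(P.prod Q) + ∫⁻ z, R' (t z.1) z.2 ∂(P.prod Q)) / 2 := by
        simp only [div_eq_mul_inv]
        rw [lintegral_mul_const' _ _ (by simp), lintegral_add_left hRs]
    _ ≤ (1 + 1) / 2 := by
        gcongr
        exact lintegral_prod_comp_estimator_le_one hR' hR'_int ht
    _ = 1 := by rw [one_add_one_eq_two, ENNReal.div_self two_ne_zero ofNat_ne_top]

end EValue

lemma isProbabilityMeasure_withDensity_of_lintegral_eq_one {E : Type*} [MeasurableSpace E]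
    {ν : Measure E} {f : E → ℝ≥0∞} (hf_int : ∫⁻ x, f x ∂ν = 1) :
    IsProbabilityMeasure (ν.withDensity f) :=
  ⟨by rw [withDensity_apply _ MeasurableSet.univ, setLIntegral_univ, hf_int]⟩

section ProductIntegrals

variable {ι : Type*} [Fintype ι]

lemma lintegral_pi_prod_eval {E : ι → Type*} [∀ j, MeasurableSpace (E j)]
    (P : ∀ j, Measure (E j)) [∀ j, IsProbabilityMeasure (P j)] {g : ∀ j, E j → ℝ≥0∞}
    (hg : ∀ j, Measurable (g j)) :
    ∫⁻ x, ∏ j, g j (x j) ∂(Measure.pi P) = ∏ j, ∫⁻ y, g j y ∂(P j) := by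
  rw [ProbabilityTheory.lintegral_prod_eq_prod_lintegral_of_indepFun _
    (fun j (x : ∀ j, E j) => g j (x j))
    (ProbabilityTheory.iIndepFun_pi fun j => (hg j).aemeasurable)
    fun j => (hg j).comp (measurable_pi_apply j)]
  exact Finset.prod_congr rfl fun j _ => (measurePreserving_eval P j).lintegral_comp (hg j)

lemma lintegral_pi_prod_div_prod_le_one {E : Type*} [MeasurableSpace E] {P : Measure E}
    [IsProbabilityMeasure P] {g h : E → ℝ≥0∞} (hg : Measurable g) (hh : Measurable h)
    (hh_top : ∀ᵐ y ∂P, h y ≠ ∞) (hgh : ∫⁻ y, g y / h y ∂P ≤ 1) :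
    ∫⁻ x, (∏ j : ι, g (x j)) / ∏ j, h (x j) ∂(Measure.pi fun _ => P) ≤ 1 := by
  have hh_top_all : ∀ᵐ x ∂(Measure.pi fun _ : ι => P), ∀ j, h (x j) ≠ ∞ :=
    Filter.eventually_all.2 fun j =>
      (Measure.quasiMeasurePreserving_eval (fun _ : ι => P) j).ae hh_top
  calc ∫⁻ x, (∏ j : ι, g (x j)) / ∏ j, h (x j) ∂(Measure.pi fun _ => P)
      = ∫⁻ x, ∏ j : ι, g (x j) / h (x j) ∂(Measure.pi fun _ => P) := by
        refine lintegral_congr_ae ?_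
        filter_upwards [hh_top_all] with x hx
        exact (ENNReal.prod_div_distrib_of_ne_top fun j _ => hx j).symm
    _ = ∏ _j : ι, ∫⁻ y, g y / h y ∂P := lintegral_pi_prod_eval _ fun _ => hg.div hh
    _ ≤ 1 := Finset.prod_le_one' fun _ _ => hgh

lemma lintegral_prod_rpow_div_prod_rpow_le_one {E : Type*} [MeasurableSpace E] {P : Measure E}
    {g h : ι → E → ℝ≥0∞} {w : ι → ℝ} (hg : ∀ i, AEMeasurable (g i) P)
    (hh : ∀ i, AEMeasurable (h i) P) (hw : ∀ i, 0 ≤ w i) (hw_sum : ∑ i, w i = 1)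
    (hh_top : ∀ i, ∀ᵐ x ∂P, h i x ≠ ∞) (hgh : ∀ i, ∫⁻ x, g i x / h i x ∂P ≤ 1) :
    ∫⁻ x, (∏ i, g i x ^ w i) / ∏ i, h i x ^ w i ∂P ≤ 1 := by
  calc ∫⁻ x, (∏ i, g i x ^ w i) / ∏ i, h i x ^ w i ∂P
      = ∫⁻ x, ∏ i, (g i x / h i x) ^ w i ∂P := by
        refine lintegral_congr_ae ?_
        filter_upwards [ae_all_iff.2 hh_top] with x hx
        simp only [ENNReal.div_rpow_of_nonneg _ _ (hw _)]
        exact (ENNReal.prod_div_distrib_of_ne_top fun i _ =>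
          ENNReal.rpow_ne_top_of_nonneg (hw i) (hx i)).symm
    _ ≤ ∏ i, (∫⁻ x, g i x / h i x ∂P) ^ w i :=
        ENNReal.lintegral_prod_norm_pow_le _ (fun i _ => (hg i).div (hh i)) hw_sum fun i _ => hw i
    _ ≤ 1 := Finset.prod_le_one' fun i _ => ENNReal.rpow_le_one (hgh i) (hw i)

end ProductIntegrals

lemma lmarginal_mul_of_dependsOn_compl {δ : Type*} [DecidableEq δ] {X : δ → Type*}
    [∀ i, MeasurableSpace (X i)] (μ : ∀ i, Measure (X i)) {s : Finset δ}
    {f g : (∀ i, X i) → ℝ≥0∞} (hf : Measurable f) (hg : DependsOn g (s : Set δ)ᶜ) :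
    lmarginal μ s (fun x => f x * g x) = fun x => lmarginal μ s f x * g x := by
  funext x
  have hg_update (y : ∀ i : s, X i) : g (Function.updateFinset x s y) = g x :=
    hg fun i hi => by simp_all [Function.updateFinset]
  simp only [lmarginal, hg_update]
  exact lintegral_mul_const _ (hf.comp measurable_updateFinset)

lemma safeDiv_of_ne_zero (a : ℝ≥0∞) {b : ℝ≥0∞} (hb : b ≠ 0) : safeDiv a b = a / b := if_neg hb

lemma safeDiv_le_div (a b : ℝ≥0∞) : safeDiv a b ≤ a / b := by
  unfold safeDiv
  split_ifs <;> simp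

lemma safeDiv_le_div_of_le {b c : ℝ≥0∞} (a : ℝ≥0∞) (hcb : c ≤ b) : safeDiv a b ≤ a / c :=
  (safeDiv_le_div a b).trans (ENNReal.div_le_div_left hcb a)

lemma safeDiv_ne_top {a : ℝ≥0∞} (ha : a ≠ ∞) (b : ℝ≥0∞) : safeDiv a b ≠ ∞ := by
  unfold safeDiv
  split_ifs with hb
  exacts [zero_ne_top, ENNReal.div_ne_top ha hb]

lemma measurable_safeDiv {E : Type*} [MeasurableSpace E] {f g : E → ℝ≥0∞} (hf : Measurable f)
    (hg : Measurable g) : Measurable fun x => safeDiv (f x) (g x) :=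
  Measurable.ite (hg (measurableSet_singleton 0)) measurable_const (hf.div hg)

section Marginal

variable (μ : ∀ i, Measure (π i)) {f g : (∀ i, π i) → ℝ≥0∞} {S A B : Finset (Fin d)}

lemma dependsOn_marginal (S : Finset (Fin d)) (f : (∀ i, π i) → ℝ≥0∞) :
    DependsOn (marginal μ S f) (S : Set (Fin d)) :=
  fun _ _ hxy => lmarginal_congr μ f fun i hi => hxy i (by simpa using hi)

lemma dependsOn_marginal_compl (hAB : Disjoint A B) (f : (∀ i, π i) → ℝ≥0∞) :
    DependsOn (marginal μ B f) (A : Set (Fin d))ᶜ :=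
  (dependsOn_marginal μ B f).mono
    (Set.subset_compl_iff_disjoint_left.2 (Finset.disjoint_coe.2 hAB))

lemma dependsOn_condDens (A B : Finset (Fin d)) (f : (∀ i, π i) → ℝ≥0∞) :
    DependsOn (condDens μ A B f) ((A ∪ B : Finset (Fin d)) : Set (Fin d)) := fun x y hxy => by
  have hB : marginal μ B f x = marginal μ B f y :=
    (dependsOn_marginal μ B f).mono (Finset.coe_subset.2 Finset.subset_union_right) hxy
  simp only [condDens, dependsOn_marginal μ (A ∪ B) f hxy, hB]

lemma marginal_mul_of_dependsOn (hf : Measurable f) (hg : DependsOn g (S : Set (Fin d))) :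
    marginal μ S (fun x => f x * g x) = fun x => marginal μ S f x * g x :=
  lmarginal_mul_of_dependsOn_compl μ hf (by simpa using hg)

variable [∀ i, SigmaFinite (μ i)]

lemma measurable_uncurry_marginal {Θ : Type*} [MeasurableSpace Θ] {p : Θ → (∀ i, π i) → ℝ≥0∞}
    (hp : Measurable (Function.uncurry p)) (S : Finset (Fin d)) :
    Measurable (Function.uncurry fun θ => marginal μ S (p θ)) := by
  have hupdate : Measurable fun w : (Θ × ∀ i, π i) × (∀ i : (Sᶜ : Finset (Fin d)), π i) =>
      (w.1.1, Function.updateFinset w.1.2 Sᶜ w.2) :=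
    (measurable_fst.comp measurable_fst).prodMk
      (measurable_updateFinset'.comp ((measurable_snd.comp measurable_fst).prodMk measurable_snd))
  exact Measurable.lintegral_prod_right (hp.comp hupdate)

lemma measurable_marginal (hf : Measurable f) (S : Finset (Fin d)) :
    Measurable (marginal μ S f) :=
  hf.lmarginal μ

lemma measurable_condDens (hf : Measurable f) (A B : Finset (Fin d)) :
    Measurable (condDens μ A B f) :=
  measurable_safeDiv (measurable_marginal μ hf _) (measurable_marginal μ hf _)

lemma marginal_empty (f : (∀ i, π i) → ℝ≥0∞) :
    marginal μ ∅ f = fun _ => ∫⁻ x, f x ∂(Measure.pi μ) := by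
  rw [marginal, Finset.compl_empty, lmarginal_univ]

lemma condDens_empty_right (hf_int : ∫⁻ x, f x ∂(Measure.pi μ) = 1) (S : Finset (Fin d)) :
    condDens μ S ∅ f = marginal μ S f := by
  funext x
  simp [condDens, marginal_empty, hf_int, safeDiv]

lemma lmarginal_marginal_union (hf : Measurable f) (hAB : Disjoint A B) :
    lmarginal μ A (marginal μ (A ∪ B) f) = marginal μ B f := by
  have hA : Disjoint A (A ∪ B)ᶜ :=
    disjoint_compl_right.mono_left Finset.subset_union_left
  have hB : A ∪ (A ∪ B)ᶜ = Bᶜ := by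
    ext i
    have hi : i ∈ A → i ∉ B := fun hiA => Finset.disjoint_left.1 hAB hiA
    simp only [Finset.mem_union, Finset.mem_compl]
    tauto
  rw [marginal, ← lmarginal_union μ f hf hA, hB, marginal]

lemma lmarginal_condDens_le_one (hf : Measurable f) (hAB : Disjoint A B) (x : ∀ i, π i) :
    lmarginal μ A (condDens μ A B f) x ≤ 1 := by
  have hB : DependsOn (fun y => (marginal μ B f y)⁻¹) (A : Set (Fin d))ᶜ := fun y z hyz => by
    simp only [dependsOn_marginal_compl μ hAB f hyz]
  calc lmarginal μ A (condDens μ A B f) x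
      ≤ lmarginal μ A (fun y => marginal μ (A ∪ B) f y * (marginal μ B f y)⁻¹) x :=
        lmarginal_mono (fun y => safeDiv_le_div _ _) x
    _ = marginal μ B f x * (marginal μ B f x)⁻¹ := by
        rw [lmarginal_mul_of_dependsOn_compl μ (measurable_marginal μ hf _) hB,
          lmarginal_marginal_union μ hf hAB]
    _ ≤ 1 := ENNReal.mul_inv_le_one _

lemma lintegral_withDensity_congr_of_dependsOn {h : (∀ i, π i) → ℝ≥0∞} (hf : Measurable f)
    (hg : Measurable g) (hh : Measurable h) (hg_dep : DependsOn g (S : Set (Fin d)))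
    (hh_dep : DependsOn h (S : Set (Fin d)))
    (hgh : ∀ x, marginal μ S f x * g x = marginal μ S f x * h x) :
    ∫⁻ x, g x ∂((Measure.pi μ).withDensity f) = ∫⁻ x, h x ∂((Measure.pi μ).withDensity f) := by
  rw [lintegral_withDensity_eq_lintegral_mul _ hf hg,
    lintegral_withDensity_eq_lintegral_mul _ hf hh]
  refine lintegral_eq_of_lmarginal_eq Sᶜ (hf.mul hg) (hf.mul hh) ?_
  calc marginal μ S (f * g)
      = fun x => marginal μ S f x * g x := marginal_mul_of_dependsOn μ hf hg_dep
    _ = fun x => marginal μ S f x * h x := funext hgh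
    _ = marginal μ S (f * h) := (marginal_mul_of_dependsOn μ hf hh_dep).symm

-- Both `0` and `∞` are fixed by doubling, so the exceptional set has twice its own measure.
lemma ae_marginal_ne_zero_and_ne_top (hf : Measurable f)
    (hf_int : ∫⁻ x, f x ∂(Measure.pi μ) ≠ ∞) (S : Finset (Fin d)) :
    ∀ᵐ x ∂((Measure.pi μ).withDensity f), marginal μ S f x ≠ 0 ∧ marginal μ S f x ≠ ∞ := by
  let Z : Set (∀ i, π i) := marginal μ S f ⁻¹' {0, ∞}
  have hZ : MeasurableSet Z := measurable_marginal μ hf S (Set.toFinite _).measurableSet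
  have hZ_dep (c : ℝ≥0∞) : DependsOn (Z.indicator fun _ => c) (S : Set (Fin d)) :=
    fun x y hxy => by
      simp only [Z, Set.indicator, Set.mem_preimage, dependsOn_marginal μ S f hxy]
  have hdouble : (Measure.pi μ).withDensity f Z = 2 * (Measure.pi μ).withDensity f Z := by
    calc (Measure.pi μ).withDensity f Z
        = ∫⁻ x, Z.indicator (fun _ => 1) x ∂((Measure.pi μ).withDensity f) := by
          rw [lintegral_indicator_const hZ, one_mul]
      _ = ∫⁻ x, Z.indicator (fun _ => 2) x ∂((Measure.pi μ).withDensity f) := by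
          refine lintegral_withDensity_congr_of_dependsOn μ hf (measurable_const.indicator hZ)
            (measurable_const.indicator hZ) (hZ_dep 1) (hZ_dep 2) fun x => ?_
          by_cases hx : x ∈ Z
          · rcases hx with h0 | htop <;> simp_all [Set.indicator]
          · simp [hx]
      _ = 2 * (Measure.pi μ).withDensity f Z := lintegral_indicator_const hZ 2
  have : IsFiniteMeasure ((Measure.pi μ).withDensity f) := isFiniteMeasure_withDensity hf_int
  have hZ_null : (Measure.pi μ).withDensity f Z = 0 := by
    rw [two_mul] at hdouble
    by_contra hpos
    exact (ENNReal.lt_add_right (measure_ne_top _ _) hpos).ne hdouble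
  filter_upwards [compl_mem_ae_iff.2 hZ_null] with x hx
  simpa [Z] using hx

lemma ae_condDens_ne_top (hf : Measurable f) (hf_int : ∫⁻ x, f x ∂(Measure.pi μ) ≠ ∞)
    (A B : Finset (Fin d)) :
    ∀ᵐ x ∂((Measure.pi μ).withDensity f), condDens μ A B f x ≠ ∞ := by
  filter_upwards [ae_marginal_ne_zero_and_ne_top μ hf hf_int (A ∪ B)] with x hx
  exact safeDiv_ne_top hx.2 _

lemma ae_condDens_div_condDens_eq (hf : Measurable f) (hf_int : ∫⁻ x, f x ∂(Measure.pi μ) ≠ ∞)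
    (q : (∀ i, π i) → ℝ≥0∞) (A B : Finset (Fin d)) :
    ∀ᵐ x ∂((Measure.pi μ).withDensity f), condDens μ A B q x / condDens μ A B f x
      = condDens μ A B q x * marginal μ B f x / marginal μ (A ∪ B) f x := by
  filter_upwards [ae_marginal_ne_zero_and_ne_top μ hf hf_int B] with x hB
  have hf_cond : condDens μ A B f x = marginal μ (A ∪ B) f x / marginal μ B f x :=
    safeDiv_of_ne_zero _ hB.1
  rw [hf_cond, div_eq_mul_inv, ENNReal.inv_div (Or.inl hB.2) (Or.inl hB.1), mul_div_assoc]

lemma marginal_mul_condDens_mul_div_le {q : (∀ i, π i) → ℝ≥0∞} (hf : Measurable f)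
    (hq : Measurable q) (hAB : Disjoint A B) :
    marginal μ B (fun x => f x *
      (condDens μ A B q x * marginal μ B f x / marginal μ (A ∪ B) f x)) ≤ marginal μ B f := by
  let r x := condDens μ A B q x * marginal μ B f x / marginal μ (A ∪ B) f x
  have hr : Measurable r := ((measurable_condDens μ hq A B).mul (measurable_marginal μ hf B)).div
    (measurable_marginal μ hf (A ∪ B))
  have hr_dep : DependsOn r ((A ∪ B : Finset (Fin d)) : Set (Fin d)) := fun x y hxy => by
    have hB : marginal μ B f x = marginal μ B f y :=
      (dependsOn_marginal μ B f).mono (Finset.coe_subset.2 Finset.subset_union_right) hxy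
    simp only [r, dependsOn_condDens μ A B q hxy, hB, dependsOn_marginal μ (A ∪ B) f hxy]
  calc marginal μ B (fun x => f x * r x)
      = lmarginal μ A (fun x => marginal μ (A ∪ B) f x * r x) := by
        rw [← marginal_mul_of_dependsOn μ hf hr_dep]
        exact (lmarginal_marginal_union μ (hf.mul hr) hAB).symm
    _ ≤ lmarginal μ A (fun x => condDens μ A B q x * marginal μ B f x) :=
        lmarginal_mono fun x => ENNReal.mul_div_le
    _ = fun x => lmarginal μ A (condDens μ A B q) x * marginal μ B f x :=
        lmarginal_mul_of_dependsOn_compl μ (measurable_condDens μ hq A B)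
          (dependsOn_marginal_compl μ hAB f)
    _ ≤ marginal μ B f :=
        fun x => mul_le_of_le_one_left' (lmarginal_condDens_le_one μ hq hAB x)

lemma lintegral_condDens_div_condDens_le {q : (∀ i, π i) → ℝ≥0∞} (hf : Measurable f)
    (hq : Measurable q) (hf_int : ∫⁻ x, f x ∂(Measure.pi μ) ≠ ∞) (hAB : Disjoint A B) :
    ∫⁻ x, condDens μ A B q x / condDens μ A B f x ∂((Measure.pi μ).withDensity f)
      ≤ ∫⁻ x, f x ∂(Measure.pi μ) := by
  have hr : Measurable fun x => condDens μ A B q x * marginal μ B f x / marginal μ (A ∪ B) f x :=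
    ((measurable_condDens μ hq A B).mul (measurable_marginal μ hf B)).div
      (measurable_marginal μ hf (A ∪ B))
  rw [lintegral_congr_ae (ae_condDens_div_condDens_eq μ hf hf_int q A B),
    lintegral_withDensity_eq_lintegral_mul _ hf hr]
  exact lintegral_le_of_lmarginal_le Bᶜ (hf.mul hr) hf
    (marginal_mul_condDens_mul_div_le μ hf hq hAB)

end Marginal

section CompositeLikelihood

/-- The pairs `(A, B)` whose conditional densities `p(x_A | x_B)` enter the composite likelihood:
`(S, ∅)` for the marginal density `p_S`, and `T` itself for a pair `T` in `𝕋_d`. -/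
def compBlock : Sd d ⊕ Td d → Finset (Fin d) × Finset (Fin d) :=
  Sum.elim (fun S => (S.1, ∅)) Subtype.val

/-- The normalised exponents of the composite likelihood, indexed like `compBlock`. -/
def compWeight (α : Sd d → ℝ) (β : Td d → ℝ) (γ : ℝ) : Sd d ⊕ Td d → ℝ :=
  Sum.elim (fun S => α S / γ) (fun T => β T / γ)

lemma disjoint_compBlock (i : Sd d ⊕ Td d) : Disjoint (compBlock i).1 (compBlock i).2 := by
  rcases i with S | T
  exacts [Finset.disjoint_empty_right _, T.2.2.2]

variable {α : Sd d → ℝ} {β : Td d → ℝ} {γ : ℝ}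

lemma compWeight_nonneg (hα : ∀ S, 0 ≤ α S) (hβ : ∀ T, 0 ≤ β T) (hγ : 0 ≤ γ)
    (i : Sd d ⊕ Td d) : 0 ≤ compWeight α β γ i := by
  rcases i with S | T
  exacts [div_nonneg (hα S) hγ, div_nonneg (hβ T) hγ]

lemma sum_compWeight (hγ : γ = ∑ S, α S + ∑ T, β T) (hγ_ne : γ ≠ 0) :
    ∑ i, compWeight α β γ i = 1 := by
  simp only [Fintype.sum_sum_type, compWeight, Sum.elim_inl, Sum.elim_inr]
  rw [← Finset.sum_div, ← Finset.sum_div, ← add_div, ← hγ, div_self hγ_ne]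

variable (μ : ∀ i, Measure (π i)) [∀ i, SigmaFinite (μ i)]

lemma compLik_eq_prod_condDens {f : (∀ i, π i) → ℝ≥0∞} (hf_int : ∫⁻ x, f x ∂(Measure.pi μ) = 1)
    (α : Sd d → ℝ) (β : Td d → ℝ) (γ : ℝ) (x : ∀ i, π i) :
    compLik μ α β γ f x =
      ∏ i, condDens μ (compBlock i).1 (compBlock i).2 f x ^ compWeight α β γ i := by
  simp [Fintype.prod_sum_type, compBlock, compWeight, compLik, condDens_empty_right μ hf_int]

lemma measurable_uncurry_compLik {Θ : Type*} [MeasurableSpace Θ] {p : Θ → (∀ i, π i) → ℝ≥0∞}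
    (hp : Measurable (Function.uncurry p)) (α : Sd d → ℝ) (β : Td d → ℝ) (γ : ℝ) :
    Measurable (Function.uncurry fun θ => compLik μ α β γ (p θ)) :=
  (Finset.measurable_fun_prod _ fun S _ =>
    (measurable_uncurry_marginal μ hp S.1).pow_const _).mul
  (Finset.measurable_fun_prod _ fun T _ => (measurable_safeDiv
    (measurable_uncurry_marginal μ hp (T.1.1 ∪ T.1.2))
    (measurable_uncurry_marginal μ hp T.1.2)).pow_const _)

lemma ae_compLik_ne_top {f : (∀ i, π i) → ℝ≥0∞} (hf : Measurable f)
    (hf_int : ∫⁻ x, f x ∂(Measure.pi μ) = 1) (hα : ∀ S, 0 ≤ α S) (hβ : ∀ T, 0 ≤ β T)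
    (hγ : 0 ≤ γ) :
    ∀ᵐ x ∂((Measure.pi μ).withDensity f), compLik μ α β γ f x ≠ ∞ := by
  have hcond : ∀ᵐ x ∂((Measure.pi μ).withDensity f), ∀ i : Sd d ⊕ Td d,
      condDens μ (compBlock i).1 (compBlock i).2 f x ≠ ∞ :=
    ae_all_iff.2 fun _ => ae_condDens_ne_top μ hf (by simp [hf_int]) _ _
  filter_upwards [hcond] with x hx
  rw [compLik_eq_prod_condDens μ hf_int]
  exact ENNReal.prod_ne_top fun i _ =>
    ENNReal.rpow_ne_top_of_nonneg (compWeight_nonneg hα hβ hγ i) (hx i)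

lemma lintegral_compLik_div_compLik_le_one {f q : (∀ i, π i) → ℝ≥0∞} (hf : Measurable f)
    (hq : Measurable q) (hf_int : ∫⁻ x, f x ∂(Measure.pi μ) = 1)
    (hq_int : ∫⁻ x, q x ∂(Measure.pi μ) = 1) (hα : ∀ S, 0 ≤ α S) (hβ : ∀ T, 0 ≤ β T)
    (hγ : γ = ∑ S, α S + ∑ T, β T) (hγ_pos : 0 < γ) :
    ∫⁻ x, compLik μ α β γ q x / compLik μ α β γ f x ∂((Measure.pi μ).withDensity f) ≤ 1 := by
  have hf_ne_top : ∫⁻ x, f x ∂(Measure.pi μ) ≠ ∞ := by simp [hf_int]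
  simp only [compLik_eq_prod_condDens μ hf_int, compLik_eq_prod_condDens μ hq_int]
  exact lintegral_prod_rpow_div_prod_rpow_le_one
    (fun _ => (measurable_condDens μ hq _ _).aemeasurable)
    (fun _ => (measurable_condDens μ hf _ _).aemeasurable)
    (compWeight_nonneg hα hβ hγ_pos.le) (sum_compWeight hγ hγ_pos.ne')
    (fun _ => ae_condDens_ne_top μ hf hf_ne_top _ _)
    (fun i => hf_int ▸ lintegral_condDens_div_condDens_le μ hf hq hf_ne_top (disjoint_compBlock i))

end CompositeLikelihood

section Sample

variable {ι : Type*} [Fintype ι]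

/-- The composite likelihood `L_{α,β}(θ; X)` of a finite sample `X`, where `f = p(·;θ)`. -/
def sampleCompLik (μ : ∀ i, Measure (π i)) (α : Sd d → ℝ) (β : Td d → ℝ) (γ : ℝ)
    (f : (∀ i, π i) → ℝ≥0∞) (x : ι → ∀ i, π i) : ℝ≥0∞ :=
  ∏ j, compLik μ α β γ f (x j)

variable (μ : ∀ i, Measure (π i)) [∀ i, SigmaFinite (μ i)] {α : Sd d → ℝ} {β : Td d → ℝ} {γ : ℝ}
  {Θ : Type*} [MeasurableSpace Θ] {p : Θ → (∀ i, π i) → ℝ≥0∞}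

lemma measurable_uncurry_sampleCompLik (hp : Measurable (Function.uncurry p)) (α : Sd d → ℝ)
    (β : Td d → ℝ) (γ : ℝ) :
    Measurable (Function.uncurry fun θ (x : ι → ∀ i, π i) => sampleCompLik μ α β γ (p θ) x) :=
  Finset.measurable_fun_prod _ fun j _ => (measurable_uncurry_compLik μ hp α β γ).comp
    (measurable_fst.prodMk ((measurable_pi_apply j).comp measurable_snd))

lemma measurable_uncurry_sampleCompLik_div (hp : Measurable (Function.uncurry p)) (α : Sd d → ℝ)
    (β : Td d → ℝ) (γ : ℝ) (θ₀ : Θ) :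
    Measurable (Function.uncurry fun θ (x : ι → ∀ i, π i) =>
      sampleCompLik μ α β γ (p θ) x / sampleCompLik μ α β γ (p θ₀) x) :=
  have hL := measurable_uncurry_sampleCompLik (ι := ι) μ hp α β γ
  hL.div (hL.of_uncurry_left.comp measurable_snd)

lemma lintegral_sampleCompLik_div_le_one (hp : Measurable (Function.uncurry p))
    (hp_int : ∀ θ, ∫⁻ x, p θ x ∂(Measure.pi μ) = 1) (hα : ∀ S, 0 ≤ α S) (hβ : ∀ T, 0 ≤ β T)
    (hγ : γ = ∑ S, α S + ∑ T, β T) (hγ_pos : 0 < γ) (θ₀ θ : Θ) :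
    ∫⁻ x : ι → ∀ i, π i, sampleCompLik μ α β γ (p θ) x / sampleCompLik μ α β γ (p θ₀) x
      ∂(Measure.pi fun _ => (Measure.pi μ).withDensity (p θ₀)) ≤ 1 := by
  have := isProbabilityMeasure_withDensity_of_lintegral_eq_one (hp_int θ₀)
  have hc := measurable_uncurry_compLik μ hp α β γ
  exact lintegral_pi_prod_div_prod_le_one hc.of_uncurry_left hc.of_uncurry_left
    (ae_compLik_ne_top μ hp.of_uncurry_left (hp_int θ₀) hα hβ hγ_pos.le)
    (lintegral_compLik_div_compLik_le_one μ hp.of_uncurry_left hp.of_uncurry_left (hp_int θ₀)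
      (hp_int θ) hα hβ hγ hγ_pos)

end Sample

theorem swapped_CLRT_type_I_error_general
    (μ : ∀ i, Measure (π i)) [∀ i, SigmaFinite (μ i)]
    {Θ : Type*} [MeasurableSpace Θ] {p : Θ → (∀ i, π i) → ℝ≥0∞}
    (hp : Measurable (Function.uncurry p)) (hp_int : ∀ θ, ∫⁻ x, p θ x ∂(Measure.pi μ) = 1)
    {α : Sd d → ℝ} {β : Td d → ℝ} (hα : ∀ S, 0 ≤ α S) (hβ : ∀ T, 0 ≤ β T)
    {γ : ℝ} (hγ : γ = ∑ S, α S + ∑ T, β T) (hγ_pos : 0 < γ)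
    {Ω : Type*} [MeasurableSpace Ω] {Pr : Measure Ω} (θstar : Θ)
    {ι κ : Type*} [Fintype ι] [Fintype κ] {X : Ω → ι → ∀ i, π i} {Y : Ω → κ → ∀ i, π i}
    (hXY : ProbabilityTheory.HasLaw (fun ω => (X ω, Y ω))
      ((Measure.pi fun _ => (Measure.pi μ).withDensity (p θstar)).prod
        (Measure.pi fun _ => (Measure.pi μ).withDensity (p θstar))) Pr)
    {s : (κ → ∀ i, π i) → Θ} {t : (ι → ∀ i, π i) → Θ} (hs : Measurable s) (ht : Measurable t)
    {LX LY : Ω → ℝ≥0∞}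
    (hLX : ∀ᵐ ω ∂Pr, sampleCompLik μ α β γ (p θstar) (X ω) ≤ LX ω)
    (hLY : ∀ᵐ ω ∂Pr, sampleCompLik μ α β γ (p θstar) (Y ω) ≤ LY ω) (a : ℝ≥0∞) :
    Pr {ω | 1 / a < (safeDiv (sampleCompLik μ α β γ (p (s (Y ω))) (X ω)) (LX ω)
      + safeDiv (sampleCompLik μ α β γ (p (t (X ω))) (Y ω)) (LY ω)) / 2} ≤ a := by
  have := isProbabilityMeasure_withDensity_of_lintegral_eq_one (hp_int θstar)
  refine le_trans (measure_mono_ae ?_) (measure_one_div_lt_swapped_average_le hXY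
    (measurable_uncurry_sampleCompLik_div μ hp α β γ θstar)
    (measurable_uncurry_sampleCompLik_div μ hp α β γ θstar)
    (lintegral_sampleCompLik_div_le_one μ hp hp_int hα hβ hγ hγ_pos θstar)
    (lintegral_sampleCompLik_div_le_one μ hp hp_int hα hβ hγ hγ_pos θstar) hs ht a)
  filter_upwards [hLX, hLY] with ω hX hY hω
  exact hω.trans_le (ENNReal.div_le_div_right
    (add_le_add (safeDiv_le_div_of_le _ hX) (safeDiv_le_div_of_le _ hY)) 2)

/-- The swapped composite likelihood ratio test controls the Type I
error at level `a` for all sample sizes: for every `n ∈ ℕ` and `a ∈ (0,1)`,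
`sup_{θ*∈Θ₀} Pr_{θ*}(V̄_{α,β,n} > 1/a) ≤ a`,
where `V̄_{α,β,n} = (V_{α,β,n}^0 + V_{α,β,n}^1)/2`. -/
theorem swapped_CLRT_type_I_error
    {d : ℕ} (hd : 1 ≤ d)
    {π : Fin d → Type*} [∀ i, MeasurableSpace (π i)]
    (μ : ∀ i, Measure (π i)) [∀ i, SigmaFinite (μ i)]
    {Θ : Type*} [MeasurableSpace Θ]
    (p : Θ → (∀ i, π i) → ℝ≥0∞)
    (hp_meas : Measurable (Function.uncurry p))
    (hp_prob : ∀ θ : Θ, ∫⁻ x, p θ x ∂(Measure.pi μ) = 1)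
    (α : Sd d → ℝ) (β : Td d → ℝ)
    (hα : ∀ S, 0 ≤ α S) (hβ : ∀ T, 0 ≤ β T)
    (γ : ℝ) (hγ : γ = ∑ S, α S + ∑ T, β T) (hγpos : 0 < γ)
    {Ω : Type*} [MeasurableSpace Ω]
    (Pr : Measure Ω) [IsProbabilityMeasure Pr]
    (θstar : Θ) (n : ℕ)
    -- the two halves `X_n^0` and `X_n^1` of the i.i.d. sample of size `2n`
    (X0 X1 : Fin n → Ω → (∀ i, π i))
    (hX0 : ∀ j, Measurable (X0 j)) (hX1 : ∀ j, Measurable (X1 j))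
    -- the `2n` observations are i.i.d. with density `p(·;θ*)` w.r.t. `μ`
    (hlaw : Measure.map (fun ω => (fun j => X0 j ω, fun j => X1 j ω)) Pr
      = (Measure.pi fun _ : Fin n => (Measure.pi μ).withDensity (p θstar)).prod
          (Measure.pi fun _ : Fin n => (Measure.pi μ).withDensity (p θstar)))
    -- the estimators `θ̃_n^0`, `θ̃_n^1` are measurable functions of `X_n^0`, `X_n^1` alone
    (t0 t1 : (Fin n → ∀ i, π i) → Θ)
    (ht0 : Measurable t0) (ht1 : Measurable t1)
    -- null hypothesis parameter space and maximum composite likelihood estimators over `Θ₀`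
    (Θ0 : Set Θ)
    (θhat0 θhat1 : Ω → Θ)
    (hθhat0_meas : @Measurable Ω Θ
      (MeasurableSpace.comap (fun ω => fun j => X0 j ω)
        (inferInstance : MeasurableSpace (Fin n → ∀ i, π i))) _ θhat0)
    (hθhat1_meas : @Measurable Ω Θ
      (MeasurableSpace.comap (fun ω => fun j => X1 j ω)
        (inferInstance : MeasurableSpace (Fin n → ∀ i, π i))) _ θhat1)
    (hθhat0_mem : ∀ ω, θhat0 ω ∈ Θ0) (hθhat1_mem : ∀ ω, θhat1 ω ∈ Θ0)
    (hθhat0_max : ∀ ω, ∀ θ ∈ Θ0,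
      (∏ j : Fin n, compLik μ α β γ (p θ) (X0 j ω))
        ≤ ∏ j : Fin n, compLik μ α β γ (p (θhat0 ω)) (X0 j ω))
    (hθhat1_max : ∀ ω, ∀ θ ∈ Θ0,
      (∏ j : Fin n, compLik μ α β γ (p θ) (X1 j ω))
        ≤ ∏ j : Fin n, compLik μ α β γ (p (θhat1 ω)) (X1 j ω))
    -- the DGP parameter lies in the null hypothesis set (Type I error regime)
    (hθstar : θstar ∈ Θ0)
    (a : ℝ) (ha0 : 0 < a) (ha1 : a < 1) :
    Pr {ω | 1 / ENNReal.ofReal a <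
        (safeDiv
            (∏ j : Fin n, compLik μ α β γ (p (t1 fun j' => X1 j' ω)) (X0 j ω))
            (∏ j : Fin n, compLik μ α β γ (p (θhat0 ω)) (X0 j ω))
          + safeDiv
            (∏ j : Fin n, compLik μ α β γ (p (t0 fun j' => X0 j' ω)) (X1 j ω))
            (∏ j : Fin n, compLik μ α β γ (p (θhat1 ω)) (X1 j ω))) / 2}
      ≤ ENNReal.ofReal a := by
  exact swapped_CLRT_type_I_error_general μ hp_meas hp_prob hα hβ hγ hγpos θstar
    (X := fun ω j => X0 j ω) (Y := fun ω j => X1 j ω) ⟨by fun_prop, hlaw⟩ ht1 ht0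
    (.of_forall fun ω => hθhat0_max ω θstar hθstar)
    (.of_forall fun ω => hθhat1_max ω θstar hθstar) (ENNReal.ofReal a)
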